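/- arXiv:2007.01077 — 4 statements merged into one kernel-verified Lean document; each statement's English description precedes it below -/
import Mathlib

section
/- Let δ ∈ (0,1] and let Q(n), n ≥ t₀, be a sequence of N×N matrices with nonnegative entries such that every row sum of each Q(n) is at most 1 and Q(n)_{ii} ≥ δ for all i and n. Fix an index i and suppose the i-th row sum of Q(t₀) is at most 1 − δ. Then for every s ≥ 0, the i-th row sum of the product Q(t₀+s)·Q(t₀+s−1)·…·Q(t₀) is at most 1 − δ^{s+1}. -/
/-- `prodFrom Q t₀ s = Q (t₀+s) * ⋯ * Q (t₀+1) * Q t₀`. -/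
def prodFrom {N : ℕ} (Q : ℕ → Matrix (Fin N) (Fin N) ℝ) (t₀ : ℕ) :
    ℕ → Matrix (Fin N) (Fin N) ℝ
  | 0 => Q t₀
  | s + 1 => Q (t₀ + s + 1) * prodFrom Q t₀ s

/-!
Track the defect `1 - ∑ j, A i j` of each row sum instead of the row sum itself. With `𝟙` the
all-ones vector, `𝟙 - (A * B) 𝟙 = (𝟙 - A 𝟙) + A (𝟙 - B 𝟙)`, and for substochastic matrices every
term on the right is nonnegative. Keeping only the diagonal term, left multiplication by `A` shrinks
the `i`-th defect at most by the factor `A i i ≥ δ`; it starts at `δ` or more.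
-/

open scoped Matrix

section RowDefect

variable {m n p R : Type*} [Fintype n] [Fintype p] [Ring R]

/-- The vector of amounts by which the row sums of a matrix fall short of `1`: for a substochastic
matrix, the probabilities of being killed in one step. -/
def rowDefect (A : Matrix m n R) : m → R := 1 - A *ᵥ 1

lemma rowDefect_apply (A : Matrix m n R) (i : m) : rowDefect A i = 1 - ∑ j, A i j := by
  simp [rowDefect, Matrix.mulVec, dotProduct]

lemma rowDefect_mul (A : Matrix m n R) (B : Matrix n p R) :
    rowDefect (A * B) = rowDefect A + A *ᵥ rowDefect B := by
  simp [rowDefect, Matrix.mulVec_sub]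

end RowDefect

section Substochastic

variable {m n p R : Type*} [Fintype n] [Fintype p] [Ring R] [PartialOrder R]

/-- Row-substochastic matrices, not necessarily square: the entries are nonnegative and every row
sum is at most `1`. -/
structure IsRowSubstochastic (A : Matrix m n R) : Prop where
  nonneg : ∀ i j, 0 ≤ A i j
  sum_row_le_one : ∀ i, ∑ j, A i j ≤ 1

namespace IsRowSubstochastic

variable [IsOrderedRing R] {A : Matrix m n R} {B : Matrix n p R}

lemma rowDefect_nonneg (hA : IsRowSubstochastic A) (i : m) : 0 ≤ rowDefect A i := by
  rw [rowDefect_apply]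
  exact sub_nonneg.2 (hA.sum_row_le_one i)

lemma mul_rowDefect_le (hA : IsRowSubstochastic A) (hB : IsRowSubstochastic B) (i : m) (k : n) :
    A i k * rowDefect B k ≤ rowDefect (A * B) i :=
  calc
    A i k * rowDefect B k ≤ ∑ l, A i l * rowDefect B l :=
      Finset.single_le_sum (f := fun l ↦ A i l * rowDefect B l)
        (fun l _ ↦ mul_nonneg (hA.nonneg i l) (hB.rowDefect_nonneg l)) (Finset.mem_univ k)
    _ ≤ rowDefect A i + ∑ l, A i l * rowDefect B l :=
      le_add_of_nonneg_left (hA.rowDefect_nonneg i)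
    _ = rowDefect (A * B) i := by rw [rowDefect_mul]; rfl

lemma mul (hA : IsRowSubstochastic A) (hB : IsRowSubstochastic B) :
    IsRowSubstochastic (A * B) where
  nonneg i j := Finset.sum_nonneg fun l _ ↦ mul_nonneg (hA.nonneg i l) (hB.nonneg l j)
  sum_row_le_one i := by
    have defect_nonneg : 0 ≤ rowDefect (A * B) i := by
      rw [rowDefect_mul]
      exact add_nonneg (hA.rowDefect_nonneg i) <|
        Finset.sum_nonneg fun l _ ↦ mul_nonneg (hA.nonneg i l) (hB.rowDefect_nonneg l)
    rwa [rowDefect_apply, sub_nonneg] at defect_nonneg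

end IsRowSubstochastic

end Substochastic

theorem stmt_3_general {n R : Type*} [Fintype n] [Ring R] [PartialOrder R] [IsOrderedRing R]
    {δ : R} (hδ : 0 ≤ δ) {Q P : ℕ → Matrix n n R}
    (hP_zero : P 0 = Q 0) (hP_succ : ∀ s, P (s + 1) = Q (s + 1) * P s)
    (hQ : ∀ t, IsRowSubstochastic (Q t)) (i : n) (hdiag : ∀ t, δ ≤ Q (t + 1) i i)
    (hstart : ∑ j, Q 0 i j ≤ 1 - δ) (s : ℕ) :
    ∑ j, P s i j ≤ 1 - δ ^ (s + 1) := by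
  have hP (s : ℕ) : IsRowSubstochastic (P s) := by
    induction s with
    | zero => exact hP_zero ▸ hQ 0
    | succ s ih => exact hP_succ s ▸ (hQ (s + 1)).mul ih
  suffices pow_le_defect : δ ^ (s + 1) ≤ rowDefect (P s) i by
    rwa [rowDefect_apply, le_sub_comm] at pow_le_defect
  induction s with
  | zero => rwa [zero_add, pow_one, hP_zero, rowDefect_apply, le_sub_comm]
  | succ s ih =>
    calc
      δ ^ (s + 1 + 1) = δ * δ ^ (s + 1) := pow_succ' δ (s + 1)
      _ ≤ δ * rowDefect (P s) i := mul_le_mul_of_nonneg_left ih hδ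
      _ ≤ Q (s + 1) i i * rowDefect (P s) i :=
        mul_le_mul_of_nonneg_right (hdiag s) ((hP s).rowDefect_nonneg i)
      _ ≤ rowDefect (P (s + 1)) i := hP_succ s ▸ (hQ (s + 1)).mul_rowDefect_le (hP s) i i

/-- for nonnegative substochastic matrices `Q n` (`n ≥ t₀`) with diagonal
entries at least `δ`, if the `i`-th row sum of `Q t₀` is at most `1 - δ`, then the
`i`-th row sum of the product `Q (t₀+s) · ⋯ · Q t₀` is at most `1 - δ^(s+1)`. -/
theorem stmt_3 (N : ℕ) (δ : ℝ) (hδ0 : 0 < δ) (hδ1 : δ ≤ 1) (t₀ : ℕ)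
    (Q : ℕ → Matrix (Fin N) (Fin N) ℝ)
    (hpos : ∀ n, t₀ ≤ n → ∀ i j, 0 ≤ Q n i j)
    (hrow : ∀ n, t₀ ≤ n → ∀ i, ∑ j, Q n i j ≤ 1)
    (hdiag : ∀ n, t₀ ≤ n → ∀ i, δ ≤ Q n i i)
    (i : Fin N)
    (hstart : ∑ j, Q t₀ i j ≤ 1 - δ) :
    ∀ s : ℕ, ∑ j, prodFrom Q t₀ s i j ≤ 1 - δ ^ (s + 1) :=
  stmt_3_general (Q := fun t ↦ Q (t₀ + t)) hδ0.le rfl (fun _ ↦ rfl)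
    (fun _ ↦ ⟨hpos _ le_self_add, hrow _ le_self_add⟩) i (fun _ ↦ hdiag _ le_self_add i) hstart
end

section
/- Let m, p ∈ ℕ and for t ≥ t₀ let Q(t) ∈ ℝ^{m×m}, R(t) ∈ ℝ^{m×p}, S(t) ∈ ℝ^{p×p} be nonnegative matrices such that the block matrix A(t) = [[Q(t), R(t)],[0, S(t)]] is row stochastic. Suppose: (i) the products S(t:t₀) = S(t)·S(t−1)·…·S(t₀) converge to a matrix S as t → ∞; (ii) there exist L ∈ ℕ, L ≥ 1, and γ ∈ (0,1] such that every product of L consecutive matrices Q(n) has ‖·‖_∞ at most 1 − γ; and (iii) there exists a row-stochastic matrix M ∈ ℝ^{m×p} such that ε(t) := R(t)·S − (I − Q(t))·M converges to the zero matrix as t → ∞. Then the block R(t:t₀) of the product A(t:t₀) = A(t)·A(t−1)·…·A(t₀), which satisfies the recursion R(t:t₀) = Q(t)·R(t−1:t₀) + R(t)·S(t−1:t₀), converges to M as t → ∞; consequently A(t:t₀) converges to [[0, M],[0, S]]. -/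
open Filter Matrix

/-- `consProd M s k = M (s+k-1) * ⋯ * M (s+1) * M s` (and `consProd M s 0 = 1`). -/
def consProd {p : ℕ} (M : ℕ → Matrix (Fin p) (Fin p) ℝ) (s : ℕ) :
    ℕ → Matrix (Fin p) (Fin p) ℝ
  | 0 => 1
  | k + 1 => M (s + k) * consProd M s k

/-- `rProd Q R S t₀ k` is the upper-right block of the product of the `k` block matrices
`[[Q t, R t],[0, S t]]` for `t = t₀ + k - 1, …, t₀`, satisfying the recursion
`R(t:t₀) = Q(t) · R(t-1:t₀) + R(t) · S(t-1:t₀)`. -/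
def rProd {m p : ℕ} (Q : ℕ → Matrix (Fin m) (Fin m) ℝ)
    (R : ℕ → Matrix (Fin m) (Fin p) ℝ) (S : ℕ → Matrix (Fin p) (Fin p) ℝ)
    (t₀ : ℕ) : ℕ → Matrix (Fin m) (Fin p) ℝ
  | 0 => 0
  | k + 1 => Q (t₀ + k) * rProd Q R S t₀ k + R (t₀ + k) * consProd S t₀ k

/-!
The error `E(k) = R(t₀+k-1:t₀) - M` obeys `E(k+1) = Q(t₀+k) E(k) + D(k)`, where the forcing
`D(k) = R(t₀+k) (S(t₀+k-1:t₀) - S) + ε(t₀+k)` tends to `0`. Since `Q` is bounded, a window of fixed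
length `L` turns this into `E(k+L) = Q(t₀+k+L-1:t₀+k) E(k) + o(1)`, so `‖E(k+L)‖ ≤ c ‖E(k)‖ + o(1)`
with `c < 1`, which forces `E → 0`. The products of the `Q(t)` solve the same recursion with no
forcing.
-/

open scoped Topology

section ScalarRecursion

theorem tendsto_zero_of_succ_le_mul_add {u d : ℕ → ℝ} {c : ℝ} (hc₀ : 0 ≤ c) (hc₁ : c < 1)
    (hu : ∀ k, 0 ≤ u k) (hd : Tendsto d atTop (𝓝 0))
    (h : ∀ᶠ k in atTop, u (k + 1) ≤ c * u k + d k) : Tendsto u atTop (𝓝 0) := by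
  refine tendsto_order.2 ⟨fun b hb => .of_forall fun k => hb.trans_le (hu k), fun ε hε => ?_⟩
  -- `ε / 2` is the fixed point of `x ↦ c * x + (1 - c) * (ε / 2)`.
  have hd_small : ∀ᶠ k in atTop, d k < (1 - c) * (ε / 2) :=
    hd.eventually_lt_const (mul_pos (sub_pos.2 hc₁) (half_pos hε))
  obtain ⟨K, hK⟩ := eventually_atTop.1 (h.and hd_small)
  have hgeom (q : ℕ) : u (q + K) - ε / 2 ≤ c ^ q * (u (0 + K) - ε / 2) := by
    refine le_geom (u := fun q => u (q + K) - ε / 2) hc₀ q fun q _ => ?_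
    obtain ⟨hstep, hsmall⟩ := hK (q + K) (Nat.le_add_left K q)
    rw [add_right_comm]
    linarith
  have hpow : Tendsto (fun q : ℕ => c ^ q * (u (0 + K) - ε / 2)) atTop (𝓝 0) := by
    simpa using (tendsto_pow_atTop_nhds_zero_of_lt_one hc₀ hc₁).mul_const (u (0 + K) - ε / 2)
  rw [← map_add_atTop_eq_nat K, eventually_map]
  filter_upwards [hpow.eventually_lt_const (half_pos hε)] with q hq
  linarith [hgeom q]

theorem tendsto_zero_of_add_le_mul_add {u d : ℕ → ℝ} {c : ℝ} {L : ℕ} (hL : 0 < L) (hc₀ : 0 ≤ c)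
    (hc₁ : c < 1) (hu : ∀ k, 0 ≤ u k) (hd : Tendsto d atTop (𝓝 0))
    (h : ∀ᶠ k in atTop, u (k + L) ≤ c * u k + d k) : Tendsto u atTop (𝓝 0) := by
  -- Summing over blocks of length `L` reduces to a one-step recursion.
  let v : ℕ → ℝ := fun q => ∑ r ∈ Finset.range L, u (q * L + r)
  have hblock (r : ℕ) : Tendsto (fun q => q * L + r) atTop atTop :=
    (tendsto_id.atTop_mul_const' hL).atTop_add_nonneg fun _ => Nat.zero_le r
  have hdsum : Tendsto (fun q => ∑ r ∈ Finset.range L, d (q * L + r)) atTop (𝓝 0) := by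
    simpa using tendsto_finsetSum (Finset.range L) fun r _ => hd.comp (hblock r)
  have hvstep : ∀ᶠ q in atTop, v (q + 1) ≤ c * v q + ∑ r ∈ Finset.range L, d (q * L + r) := by
    have hall : ∀ᶠ q in atTop, ∀ r ∈ Finset.range L,
        u (q * L + r + L) ≤ c * u (q * L + r) + d (q * L + r) :=
      (Finset.eventually_all _).2 fun r _ => (hblock r).eventually h
    filter_upwards [hall] with q hq
    simp only [v, Finset.mul_sum, ← Finset.sum_add_distrib]
    refine Finset.sum_le_sum fun r hr => ?_
    rw [add_one_mul, add_right_comm]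
    exact hq r hr
  have hv : Tendsto v atTop (𝓝 0) :=
    tendsto_zero_of_succ_le_mul_add hc₀ hc₁ (fun q => Finset.sum_nonneg fun r _ => hu _) hdsum
      hvstep
  have huv (k : ℕ) : u k ≤ v (k / L) := by
    have hmod : k % L ∈ Finset.range L := Finset.mem_range.2 (Nat.mod_lt k hL)
    calc u k = u (k / L * L + k % L) := by rw [Nat.div_add_mod']
      _ ≤ v (k / L) :=
        Finset.single_le_sum (f := fun r => u (k / L * L + r)) (fun r _ => hu _) hmod
  exact squeeze_zero hu huv (hv.comp (Nat.tendsto_div_const_atTop hL.ne'))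

end ScalarRecursion

theorem tendsto_fromBlocks {ι l m n o α : Type*} [TopologicalSpace α] {f : Filter ι}
    {A : ι → Matrix n l α} {B : ι → Matrix n m α} {C : ι → Matrix o l α} {D : ι → Matrix o m α}
    {A₀ : Matrix n l α} {B₀ : Matrix n m α} {C₀ : Matrix o l α} {D₀ : Matrix o m α}
    (hA : Tendsto A f (𝓝 A₀)) (hB : Tendsto B f (𝓝 B₀)) (hC : Tendsto C f (𝓝 C₀))
    (hD : Tendsto D f (𝓝 D₀)) :
    Tendsto (fun i => fromBlocks (A i) (B i) (C i) (D i)) f (𝓝 (fromBlocks A₀ B₀ C₀ D₀)) := by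
  have hcont : Continuous fun x : (Matrix n l α × Matrix n m α) × Matrix o l α × Matrix o m α =>
      fromBlocks x.1.1 x.1.2 x.2.1 x.2.2 :=
    Continuous.matrix_fromBlocks (by fun_prop) (by fun_prop) (by fun_prop) (by fun_prop)
  exact (hcont.tendsto ((A₀, B₀), C₀, D₀)).comp
    ((hA.prodMk_nhds hB).prodMk_nhds (hC.prodMk_nhds hD))

section LinftyOpNorm

open scoped Matrix.Norms.Operator

variable {l m n o α : Type*} [Fintype m]

theorem tendsto_matrix_mul_zero [NonUnitalSeminormedRing α] [Fintype l] [Finite n] {ι : Type*}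
    {f : Filter ι} {A : ι → Matrix l m α} {B : ι → Matrix m n α}
    (hA : IsBoundedUnder (· ≤ ·) f fun i => ‖A i‖) (hB : Tendsto B f (𝓝 0)) :
    Tendsto (fun i => A i * B i) f (𝓝 0) := by
  have := Fintype.ofFinite n
  exact hB.op_zero_isBoundedUnder_le hA (fun X Y => Y * X) fun X Y =>
    (linfty_opNorm_mul Y X).trans_eq (mul_comm _ _)

variable [Fintype n] [SeminormedAddCommGroup α]

theorem linfty_opNorm_le_iff {A : Matrix m n α} {c : ℝ} (hc : 0 ≤ c) :
    ‖A‖ ≤ c ↔ ∀ i, ∑ j, ‖A i j‖ ≤ c := by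
  lift c to NNReal using hc
  simp only [← coe_nnnorm, ← NNReal.coe_sum, NNReal.coe_le_coe, linfty_opNNNorm_def,
    Finset.sup_le_iff, Finset.mem_univ, true_imp_iff]

theorem linfty_opNorm_le_one_of_row_stochastic {A : Matrix m n ℝ}
    (hA : ∀ i j, 0 ≤ A i j) (hsum : ∀ i, ∑ j, A i j = 1) : ‖A‖ ≤ 1 := by
  refine (linfty_opNorm_le_iff zero_le_one).2 fun i => ?_
  simp only [Real.norm_of_nonneg (hA i _), hsum i, le_refl]

variable [Fintype l] [Fintype o]

theorem linfty_opNorm_submatrix_le (A : Matrix m n α) (f : l → m) {g : o → n}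
    (hg : Function.Injective g) : ‖A.submatrix f g‖ ≤ ‖A‖ := by
  refine (linfty_opNorm_le_iff (norm_nonneg A)).2 fun i => ?_
  calc ∑ j, ‖A (f i) (g j)‖ = ∑ j ∈ Finset.univ.map ⟨g, hg⟩, ‖A (f i) j‖ := by simp
    _ ≤ ∑ j, ‖A (f i) j‖ := Finset.sum_le_univ_sum_of_nonneg fun _ => norm_nonneg _
    _ ≤ ‖A‖ := (linfty_opNorm_le_iff (norm_nonneg A)).1 le_rfl (f i)

theorem linfty_opNorm_le_fromBlocks₁₁ (A : Matrix m n α) (B : Matrix m o α) (C : Matrix l n α)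
    (D : Matrix l o α) : ‖A‖ ≤ ‖fromBlocks A B C D‖ := by
  have hblock : (fromBlocks A B C D).submatrix Sum.inl Sum.inl = A := rfl
  exact (congrArg norm hblock).ge.trans (linfty_opNorm_submatrix_le _ _ Sum.inl_injective)

theorem linfty_opNorm_le_fromBlocks₁₂ (A : Matrix m n α) (B : Matrix m o α) (C : Matrix l n α)
    (D : Matrix l o α) : ‖B‖ ≤ ‖fromBlocks A B C D‖ := by
  have hblock : (fromBlocks A B C D).submatrix Sum.inl Sum.inr = B := rfl
  exact (congrArg norm hblock).ge.trans (linfty_opNorm_submatrix_le _ _ Sum.inr_injective)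

end LinftyOpNorm

section MatrixRecursion

open scoped Matrix.Norms.Operator

variable {m t₀ : ℕ} {n : Type*} [Finite n] {Q : ℕ → Matrix (Fin m) (Fin m) ℝ}
  {E D : ℕ → Matrix (Fin m) n ℝ}

theorem tendsto_sub_consProd_mul_zero (hQ : IsBoundedUnder (· ≤ ·) atTop fun t => ‖Q t‖)
    (hE : ∀ k, E (k + 1) = Q (t₀ + k) * E k + D k) (hD : Tendsto D atTop (𝓝 0)) (j : ℕ) :
    Tendsto (fun k => E (k + j) - consProd Q (t₀ + k) j * E k) atTop (𝓝 0) := by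
  induction j with
  | zero => simp [consProd]
  | succ j ih =>
    have hstep (k : ℕ) : E (k + (j + 1)) - consProd Q (t₀ + k) (j + 1) * E k =
        Q (t₀ + k + j) * (E (k + j) - consProd Q (t₀ + k) j * E k) + D (k + j) := by
      rw [← add_assoc k j 1, hE, consProd, Matrix.mul_sub, Matrix.mul_assoc, add_assoc t₀ k j]
      abel
    have hindex : Tendsto (fun k => t₀ + k + j) atTop atTop :=
      add_right_strictMono.tendsto_atTop.atTop_add_nonneg fun _ => Nat.zero_le j
    simpa only [hstep, add_zero, Function.comp_apply] using
      (tendsto_matrix_mul_zero (hindex.isBoundedUnder_comp hQ) ih).add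
        (hD.comp (tendsto_add_atTop_nat j))

theorem tendsto_zero_of_succ_eq_mul_add {L : ℕ} {c : ℝ} (hL : 0 < L) (hc : c < 1)
    (hQ : IsBoundedUnder (· ≤ ·) atTop fun t => ‖Q t‖)
    (hQL : ∀ᶠ s in atTop, ‖consProd Q s L‖ ≤ c)
    (hE : ∀ k, E (k + 1) = Q (t₀ + k) * E k + D k) (hD : Tendsto D atTop (𝓝 0)) :
    Tendsto E atTop (𝓝 0) := by
  have := Fintype.ofFinite n
  obtain ⟨s, hs⟩ := hQL.exists
  refine tendsto_zero_iff_norm_tendsto_zero.2 <|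
    tendsto_zero_of_add_le_mul_add hL ((norm_nonneg _).trans hs) hc (fun k => norm_nonneg _)
      (tendsto_zero_iff_norm_tendsto_zero.1 (tendsto_sub_consProd_mul_zero hQ hE hD L)) ?_
  filter_upwards [add_right_strictMono.tendsto_atTop.eventually hQL] with k hk
  calc ‖E (k + L)‖
      ≤ ‖consProd Q (t₀ + k) L * E k‖ + ‖E (k + L) - consProd Q (t₀ + k) L * E k‖ :=
        norm_le_insert' _ _
    _ ≤ c * ‖E k‖ + ‖E (k + L) - consProd Q (t₀ + k) L * E k‖ := by
        gcongr
        exact (linfty_opNorm_mul _ _).trans (by gcongr)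

theorem tendsto_consProd_zero {L : ℕ} {c : ℝ} (hL : 0 < L) (hc : c < 1)
    (hQ : IsBoundedUnder (· ≤ ·) atTop fun t => ‖Q t‖)
    (hQL : ∀ᶠ s in atTop, ‖consProd Q s L‖ ≤ c) :
    Tendsto (fun k => consProd Q t₀ k) atTop (𝓝 0) :=
  tendsto_zero_of_succ_eq_mul_add (D := fun _ => 0) hL hc hQ hQL
    (fun k => by rw [consProd, add_zero]) tendsto_const_nhds

theorem tendsto_rProd {p L : ℕ} {c : ℝ} {R : ℕ → Matrix (Fin m) (Fin p) ℝ}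
    {S : ℕ → Matrix (Fin p) (Fin p) ℝ} {S₀ : Matrix (Fin p) (Fin p) ℝ}
    {M : Matrix (Fin m) (Fin p) ℝ} (hL : 0 < L) (hc : c < 1)
    (hQ : IsBoundedUnder (· ≤ ·) atTop fun t => ‖Q t‖)
    (hQL : ∀ᶠ s in atTop, ‖consProd Q s L‖ ≤ c)
    (hR : IsBoundedUnder (· ≤ ·) atTop fun t => ‖R t‖)
    (hS : Tendsto (fun k => consProd S t₀ k) atTop (𝓝 S₀))
    (hε : Tendsto (fun t => R t * S₀ - (1 - Q t) * M) atTop (𝓝 0)) :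
    Tendsto (fun k => rProd Q R S t₀ k) atTop (𝓝 M) := by
  have hshift : Tendsto (fun k => t₀ + k) atTop atTop := add_right_strictMono.tendsto_atTop
  have hforcing : Tendsto (fun k => R (t₀ + k) * (consProd S t₀ k - S₀) +
      (R (t₀ + k) * S₀ - (1 - Q (t₀ + k)) * M)) atTop (𝓝 0) := by
    simpa only [add_zero, Function.comp_apply] using
      (tendsto_matrix_mul_zero (hshift.isBoundedUnder_comp hR) (tendsto_sub_nhds_zero_iff.2 hS)).add
        (hε.comp hshift)
  refine tendsto_sub_nhds_zero_iff.1 <|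
    tendsto_zero_of_succ_eq_mul_add (t₀ := t₀) hL hc hQ hQL (fun k => ?_) hforcing
  simp only [rProd, Matrix.mul_sub, Matrix.sub_mul, Matrix.one_mul]
  abel

theorem stmt_6_general {p L : ℕ} {c : ℝ} {R : ℕ → Matrix (Fin m) (Fin p) ℝ}
    {S : ℕ → Matrix (Fin p) (Fin p) ℝ} {S₀ : Matrix (Fin p) (Fin p) ℝ}
    {M : Matrix (Fin m) (Fin p) ℝ} (hL : 0 < L) (hc : c < 1)
    (hQ : IsBoundedUnder (· ≤ ·) atTop fun t => ‖Q t‖)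
    (hQL : ∀ᶠ s in atTop, ‖consProd Q s L‖ ≤ c)
    (hR : IsBoundedUnder (· ≤ ·) atTop fun t => ‖R t‖)
    (hS : Tendsto (fun k => consProd S t₀ k) atTop (𝓝 S₀))
    (hε : Tendsto (fun t => R t * S₀ - (1 - Q t) * M) atTop (𝓝 0)) :
    Tendsto (fun k => rProd Q R S t₀ k) atTop (𝓝 M) ∧
    Tendsto (fun k => fromBlocks (consProd Q t₀ k) (rProd Q R S t₀ k) 0 (consProd S t₀ k))
      atTop (𝓝 (fromBlocks 0 M 0 S₀)) :=
  have hRlim := tendsto_rProd hL hc hQ hQL hR hS hε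
  ⟨hRlim, tendsto_fromBlocks (tendsto_consProd_zero hL hc hQ hQL) hRlim tendsto_const_nhds hS⟩

end MatrixRecursion

/-- for row-stochastic block matrices `A(t) = [[Q(t), R(t)],[0, S(t)]]`
(`t ≥ t₀`), if (i) the products `S(t:t₀)` converge to `S`, (ii) every product of `L`
consecutive `Q`'s has maximum absolute row sum at most `1 - γ`, and (iii)
`R(t)·S - (I - Q(t))·M → 0` for a row-stochastic `M`, then `R(t:t₀) → M` and
`A(t:t₀) → [[0, M],[0, S]]`. -/
theorem stmt_6 (m p t₀ : ℕ)
    (Q : ℕ → Matrix (Fin m) (Fin m) ℝ)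
    (R : ℕ → Matrix (Fin m) (Fin p) ℝ)
    (S : ℕ → Matrix (Fin p) (Fin p) ℝ)
    (hstoch : ∀ t, t₀ ≤ t →
      (∀ i j, 0 ≤ Matrix.fromBlocks (Q t) (R t) 0 (S t) i j) ∧
      ∀ i, ∑ j, Matrix.fromBlocks (Q t) (R t) 0 (S t) i j = 1)
    (Slim : Matrix (Fin p) (Fin p) ℝ)
    (hS : Tendsto (fun k => consProd S t₀ k) atTop (nhds Slim))
    (L : ℕ) (hL : 1 ≤ L) (γ : ℝ) (hγ0 : 0 < γ) (hγ1 : γ ≤ 1)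
    (hQ : ∀ s, t₀ ≤ s → ∀ i, ∑ j, |consProd Q s L i j| ≤ 1 - γ)
    (M : Matrix (Fin m) (Fin p) ℝ)
    (hM : (∀ i j, 0 ≤ M i j) ∧ ∀ i, ∑ j, M i j = 1)
    (hε : Tendsto (fun t => R t * Slim - (1 - Q t) * M) atTop
      (nhds (0 : Matrix (Fin m) (Fin p) ℝ))) :
    Tendsto (fun k => rProd Q R S t₀ k) atTop (nhds M) ∧
    Tendsto
      (fun k => Matrix.fromBlocks (consProd Q t₀ k) (rProd Q R S t₀ k) 0 (consProd S t₀ k))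
      atTop (nhds (Matrix.fromBlocks 0 M 0 Slim)) := by
  open scoped Matrix.Norms.Operator in
  have hA : IsBoundedUnder (· ≤ ·) atTop fun t => ‖fromBlocks (Q t) (R t) 0 (S t)‖ :=
    isBoundedUnder_of_eventually_le <| eventually_atTop.2 ⟨t₀, fun t ht =>
      linfty_opNorm_le_one_of_row_stochastic (hstoch t ht).1 (hstoch t ht).2⟩
  exact stmt_6_general hL (sub_lt_self 1 hγ0)
    (hA.mono_le <| .of_forall fun t => linfty_opNorm_le_fromBlocks₁₁ _ _ _ _)
    (eventually_atTop.2 ⟨t₀, fun s hs => (linfty_opNorm_le_iff (sub_nonneg.2 hγ1)).2 (hQ s hs)⟩)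
    (hA.mono_le <| .of_forall fun t => linfty_opNorm_le_fromBlocks₁₂ _ _ _ _) hS hε
end

section
/- Let Λ = diag(λ_1,…,λ_N) with λ_i ∈ (0,1] for every i, let A(t) be a sequence of N×N row-stochastic matrices converging to a row-stochastic matrix A, and let b(t) ∈ ℝ^N be a sequence converging to b ∈ ℝ^N. Then for every initial vector x(0) ∈ ℝ^N, the dynamics x(t+1) = (I−Λ)A(t)x(t) + Λb(t) converge to the steady state x* = (I − (I−Λ)A)^{-1} Λ b; in particular the limit does not depend on x(0). -/
open Filter

/-!
The steady state `x*` is the fixed point of the limiting update `v ↦ (I - Λ) A v + Λ b`. In the sup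
norm this map contracts by `‖I - Λ‖ ‖A‖ < 1`, since `Λ` is diagonal and `A` has absolute row sums at
most `1`. By continuity of the norm all late updates contract by a common `K < 1`, and they move
`x*` by a vanishing amount, so the error obeys `e (t + 1) ≤ K * e t + o(1)` and tends to `0`.
-/

section Recurrence

open scoped Topology NNReal

lemma le_arithGeom_of_le_mul_add {R : Type*} [Semiring R] [PartialOrder R] [IsOrderedRing R]
    {a b : R} {u : ℕ → R} (ha : 0 ≤ a) (hu : ∀ t, u (t + 1) ≤ a * u t + b) (t : ℕ) :
    u t ≤ arithGeom a b (u 0) t := by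
  have affine_mono : Monotone fun r => a * r + b := fun r s hrs => by dsimp only; gcongr
  exact affine_mono.seq_le_seq t le_rfl (fun k _ => hu k) fun k _ => (arithGeom_succ k).ge

lemma tendsto_zero_of_eventually_le_mul_add {a d : ℕ → ℝ} {c : ℝ} (hc0 : 0 ≤ c) (hc1 : c < 1)
    (ha : ∀ t, 0 ≤ a t) (hd : Tendsto d atTop (𝓝 0))
    (h : ∀ᶠ t in atTop, a (t + 1) ≤ c * a t + d t) : Tendsto a atTop (𝓝 0) := by
  refine tendsto_order.2 ⟨fun r hr => .of_forall fun t => hr.trans_le (ha t), fun ε hε => ?_⟩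
  have hc : 0 < 1 - c := sub_pos.2 hc1
  set δ := (1 - c) * (ε / 2)
  have hδ : 0 < δ := by positivity
  obtain ⟨T, hT⟩ := eventually_atTop.1 (h.and (hd.eventually_le_const hδ))
  have bound (k : ℕ) : a (k + T) ≤ arithGeom c δ (a (0 + T)) k := by
    refine le_arithGeom_of_le_mul_add (u := fun k => a (k + T)) hc0 (fun k => ?_) k
    obtain ⟨hstep, hsmall⟩ := hT (k + T) (Nat.le_add_left T k)
    rw [add_right_comm]
    exact hstep.trans (by gcongr)
  have limit_lt : δ / (1 - c) < ε := by
    rw [mul_div_cancel_left₀ _ hc.ne']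
    exact half_lt_self hε
  have shifted : ∀ᶠ k in atTop, a (k + T) < ε :=
    ((tendsto_arithGeom_nhds_of_lt_one hc0 hc1).eventually_lt_const limit_lt).mono
      fun k hk => (bound k).trans_lt hk
  rw [← map_add_atTop_eq_nat T]
  exact shifted

theorem tendsto_of_eventually_lipschitzWith {X : Type*} [PseudoMetricSpace X] {f : ℕ → X → X}
    {x : ℕ → X} {y : X} {K : ℝ≥0} (hK : K < 1) (hf : ∀ᶠ t in atTop, LipschitzWith K (f t))
    (hy : Tendsto (fun t => f t y) atTop (𝓝 y)) (hx : ∀ t, x (t + 1) = f t (x t)) :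
    Tendsto x atTop (𝓝 y) := by
  rw [tendsto_iff_dist_tendsto_zero] at hy ⊢
  refine tendsto_zero_of_eventually_le_mul_add K.coe_nonneg hK (fun _ => dist_nonneg) hy ?_
  filter_upwards [hf] with t ht
  calc dist (x (t + 1)) y
      = dist (f t (x t)) y := by rw [hx]
    _ ≤ dist (f t (x t)) (f t y) + dist (f t y) y := dist_triangle _ _ _
    _ ≤ K * dist (x t) y + dist (f t y) y := by gcongr; exact ht.dist_le_mul _ _

end Recurrence

section Matrix

open scoped Topology NNReal Matrix Matrix.Norms.Operator

variable {m n R : Type*} [Fintype m] [Fintype n]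

lemma lipschitzWith_mulVec_add [NonUnitalSeminormedRing R] (M : Matrix m n R) (u : m → R) :
    LipschitzWith ‖M‖₊ fun v => M *ᵥ v + u :=
  LipschitzWith.of_dist_le_mul fun v w => by
    rw [dist_add_right, dist_eq_norm, dist_eq_norm, ← Matrix.mulVec_sub]
    exact Matrix.linfty_opNorm_mulVec M (v - w)

lemma linfty_opNorm_le_of_sum_norm_le [SeminormedAddCommGroup R] {M : Matrix m n R} {r : ℝ}
    (hr : 0 ≤ r) (hM : ∀ i, ∑ j, ‖M i j‖ ≤ r) : ‖M‖ ≤ r := by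
  lift r to ℝ≥0 using hr
  rw [Matrix.linfty_opNorm_def, NNReal.coe_le_coe]
  refine Finset.sup_le fun i _ => ?_
  rw [← NNReal.coe_le_coe]
  push_cast
  exact hM i

variable [DecidableEq n]

lemma linfty_opNorm_one_sub_diagonal_lt_one [SeminormedRing R] {d : n → R}
    (hd : ∀ i, ‖1 - d i‖ < 1) : ‖(1 : Matrix n n R) - Matrix.diagonal d‖ < 1 := by
  rw [← Matrix.diagonal_one, Matrix.diagonal_sub, Matrix.linfty_opNorm_diagonal]
  exact (pi_norm_lt_iff one_pos).2 hd

lemma isUnit_one_sub_of_linfty_opNorm_lt_one [NormedRing R] [CompleteSpace R] {M : Matrix n n R}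
    (hM : ‖M‖ < 1) : IsUnit (1 - M) :=
  -- The uniformity of the operator norm is the product one only after unfolding.
  haveI : @CompleteSpace (Matrix n n R) PseudoMetricSpace.toUniformSpace :=
    inferInstanceAs (CompleteSpace (n → n → R))
  isUnit_one_sub_of_norm_lt_one hM

lemma mulVec_nonsing_inv_one_sub_add [CommRing R] {M : Matrix n n R} (hM : IsUnit (1 - M))
    (u : n → R) : M *ᵥ ((1 - M)⁻¹ *ᵥ u) + u = (1 - M)⁻¹ *ᵥ u := by
  have solves : (1 - M) *ᵥ ((1 - M)⁻¹ *ᵥ u) = u := by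
    rw [Matrix.mulVec_mulVec, Matrix.mul_nonsing_inv _ ((Matrix.isUnit_iff_isUnit_det _).1 hM),
      Matrix.one_mulVec]
  rw [Matrix.sub_mulVec, Matrix.one_mulVec] at solves
  exact (sub_eq_iff_eq_add'.1 solves).symm

variable [NormedCommRing R] [CompleteSpace R]

theorem tendsto_of_mulVec_add_recurrence {M : ℕ → Matrix n n R} {M' : Matrix n n R}
    {u x : ℕ → n → R} {u' : n → R} (hM : Tendsto M atTop (𝓝 M')) (hM' : ‖M'‖ < 1)
    (hu : Tendsto u atTop (𝓝 u')) (hx : ∀ t, x (t + 1) = M t *ᵥ x t + u t) :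
    Tendsto x atTop (𝓝 ((1 - M')⁻¹ *ᵥ u')) := by
  obtain ⟨K, hMK, hK⟩ : ∃ K : ℝ≥0, ‖M'‖₊ < K ∧ K < 1 := exists_between hM'
  have contracting : ∀ᶠ t in atTop, LipschitzWith K fun v => M t *ᵥ v + u t :=
    (hM.nnnorm.eventually_le_const hMK).mono fun t ht =>
      (lipschitzWith_mulVec_add (M t) (u t)).weaken ht
  have affine_cont (v : n → R) :
      Continuous fun p : Matrix n n R × (n → R) => p.1 *ᵥ v + p.2 := by fun_prop
  have drift := ((affine_cont ((1 - M')⁻¹ *ᵥ u')).tendsto (M', u')).comp (hM.prodMk_nhds hu)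
  have isUnit : IsUnit (1 - M') := isUnit_one_sub_of_linfty_opNorm_lt_one hM'
  rw [mulVec_nonsing_inv_one_sub_add isUnit] at drift
  exact tendsto_of_eventually_lipschitzWith hK contracting drift hx

theorem stmt_10_general {lam : n → R} (hlam : ∀ i, ‖1 - lam i‖ < 1)
    {A : ℕ → Matrix n n R} {Alim : Matrix n n R} (hAlim : ∀ i, ∑ j, ‖Alim i j‖ ≤ 1)
    (hAconv : Tendsto A atTop (𝓝 Alim)) {b : ℕ → n → R} {blim : n → R}
    (hb : Tendsto b atTop (𝓝 blim)) {x : ℕ → n → R}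
    (hx : ∀ t, x (t + 1) =
      ((1 - Matrix.diagonal lam) * A t) *ᵥ x t + Matrix.diagonal lam *ᵥ b t) :
    Tendsto x atTop
      (𝓝 ((1 - (1 - Matrix.diagonal lam) * Alim)⁻¹ *ᵥ (Matrix.diagonal lam *ᵥ blim))) := by
  have norm_lt : ‖(1 - Matrix.diagonal lam) * Alim‖ < 1 :=
    (norm_mul_le _ _).trans_lt <| mul_lt_one_of_nonneg_of_lt_one_left (norm_nonneg _)
      (linfty_opNorm_one_sub_diagonal_lt_one hlam)
      (linfty_opNorm_le_of_sum_norm_le zero_le_one hAlim)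
  have mulVec_cont : Continuous fun v : n → R => Matrix.diagonal lam *ᵥ v := by fun_prop
  exact tendsto_of_mulVec_add_recurrence (hAconv.const_mul _) norm_lt
    ((mulVec_cont.tendsto blim).comp hb) hx

end Matrix

/-- for `Λ = diag(λ)` with `λ i ∈ (0,1]`, row-stochastic `A(t) → A`
(with `A` row stochastic) and `b(t) → b`, the dynamics
`x(t+1) = (I-Λ)A(t)x(t) + Λb(t)` converge, for every initial vector `x(0)`, to
`x* = (I - (I-Λ)A)⁻¹ Λ b`; in particular the limit does not depend on `x(0)`. -/
theorem stmt_10 (N : ℕ) (lam : Fin N → ℝ) (hlam : ∀ i, 0 < lam i ∧ lam i ≤ 1)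
    (A : ℕ → Matrix (Fin N) (Fin N) ℝ) (Alim : Matrix (Fin N) (Fin N) ℝ)
    (hAstoch : ∀ t, (∀ i j, 0 ≤ A t i j) ∧ ∀ i, ∑ j, A t i j = 1)
    (hAlim : (∀ i j, 0 ≤ Alim i j) ∧ ∀ i, ∑ j, Alim i j = 1)
    (hAconv : Tendsto A atTop (nhds Alim))
    (b : ℕ → Fin N → ℝ) (blim : Fin N → ℝ)
    (hb : Tendsto b atTop (nhds blim))
    (x : ℕ → Fin N → ℝ)
    (hx : ∀ t, x (t + 1) =
      ((1 - Matrix.diagonal lam) * A t).mulVec (x t) + (Matrix.diagonal lam).mulVec (b t)) :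
    Tendsto x atTop
      (nhds ((1 - (1 - Matrix.diagonal lam) * Alim)⁻¹.mulVec
        ((Matrix.diagonal lam).mulVec blim))) :=
  stmt_10_general
    (fun i => by rw [Real.norm_eq_abs, abs_lt]; constructor <;> linarith [hlam i])
    (fun i => by simp only [Real.norm_of_nonneg (hAlim.1 i _), hAlim.2 i, le_refl]) hAconv hb hx
end

section
/- Let A be an N×N row-stochastic matrix, Λ = diag(λ_1,…,λ_N) with λ_i ∈ (0,1] for every i, and W an N×p nonnegative matrix each of whose rows sums to 1, so that the (N+p)×(N+p) block matrix Ã = [[(I−Λ)A, ΛW],[0, I_p]] is row stochastic. Then the powers of Ã converge: lim_{t→∞} Ã^t = [[0, F·Λ·W],[0, I_p]], where F = (I − (I−Λ)A)^{-1}. -/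
open Filter Matrix

/-!
Write `B = (I - Λ)A`. Powers of the block matrix are `[[B ^ t, (∑ k < t, B ^ k) ΛW], [0, I]]`, so
everything follows from `B ^ t → 0`: this makes `det (I - B ^ t)` nonzero for large `t`, hence its
factor `I - B` is invertible and the geometric sums `(I - B)⁻¹ (I - B ^ t)` converge to `(I - B)⁻¹`.
That `B ^ t → 0` holds because the absolute row sums of `B` are at most `|1 - λ i| < 1`, which makes
`B` a contraction for the operator norm induced by the sup norm.
-/

section BlockPowers

variable {m n R : Type*} [Fintype m] [Fintype n] [DecidableEq m] [DecidableEq n]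

theorem fromBlocks_zero_one_pow [Semiring R] (B : Matrix n n R) (C : Matrix n m R) (t : ℕ) :
    fromBlocks B C 0 (1 : Matrix m m R) ^ t =
      fromBlocks (B ^ t) ((∑ k ∈ Finset.range t, B ^ k) * C) 0 1 := by
  induction t with
  | zero => simp
  | succ t ih =>
    rw [pow_succ, ih, fromBlocks_multiply, Finset.sum_range_succ_comm, Matrix.add_mul]
    simp [pow_succ]

end BlockPowers

section TendstoPow

variable {m n K : Type*} [Fintype m] [Fintype n] [DecidableEq m] [DecidableEq n]
  [Field K] [TopologicalSpace K] [IsTopologicalRing K] [T1Space K]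

theorem isUnit_one_sub_of_tendsto_pow {B : Matrix n n K}
    (hB : Tendsto (fun t : ℕ => B ^ t) atTop (nhds 0)) : IsUnit (1 - B) := by
  have hdet : Tendsto (fun t : ℕ => (1 - B ^ t).det) atTop (nhds 1) := by
    have hcont : Continuous fun X : Matrix n n K => (1 - X).det := by fun_prop
    simpa [Function.comp_def] using (hcont.tendsto 0).comp hB
  obtain ⟨t, ht⟩ := (hdet.eventually_ne one_ne_zero).exists
  rw [← mul_neg_geom_sum, det_mul] at ht
  exact (isUnit_iff_isUnit_det _).2 (left_ne_zero_of_mul ht).isUnit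

theorem tendsto_geom_sum_of_tendsto_pow {B : Matrix n n K}
    (hB : Tendsto (fun t : ℕ => B ^ t) atTop (nhds 0)) :
    Tendsto (fun t : ℕ => ∑ k ∈ Finset.range t, B ^ k) atTop (nhds (1 - B)⁻¹) := by
  have hunit : IsUnit (1 - B).det := (isUnit_iff_isUnit_det _).1 (isUnit_one_sub_of_tendsto_pow hB)
  have hsum (t : ℕ) : ∑ k ∈ Finset.range t, B ^ k = (1 - B)⁻¹ * (1 - B ^ t) := by
    rw [← mul_neg_geom_sum, nonsing_inv_mul_cancel_left _ _ hunit]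
  simp only [hsum]
  simpa using (hB.const_sub 1).const_mul (1 - B)⁻¹

theorem tendsto_fromBlocks_zero_one_pow {B : Matrix n n K}
    (hB : Tendsto (fun t : ℕ => B ^ t) atTop (nhds 0)) (C : Matrix n m K) :
    Tendsto (fun t : ℕ => fromBlocks B C 0 (1 : Matrix m m K) ^ t) atTop
      (nhds (fromBlocks 0 ((1 - B)⁻¹ * C) 0 1)) := by
  have hcont : Continuous fun X : Matrix n n K × Matrix n n K =>
      fromBlocks X.1 (X.2 * C) 0 (1 : Matrix m m K) := by
    fun_prop
  simp only [fromBlocks_zero_one_pow]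
  exact (hcont.tendsto (0, (1 - B)⁻¹)).comp (hB.prodMk_nhds (tendsto_geom_sum_of_tendsto_pow hB))

end TendstoPow

section RowSums

variable {n R : Type*} [Fintype n] [DecidableEq n]

attribute [local instance] Matrix.linftyOpSemiNormedRing in
theorem tendsto_pow_of_forall_sum_norm_lt_one [SeminormedRing R] {B : Matrix n n R}
    (hB : ∀ i, ∑ j, ‖B i j‖ < 1) : Tendsto (fun t : ℕ => B ^ t) atTop (nhds 0) := by
  have hrow (i : n) : ∑ j, ‖B i j‖₊ < 1 := by simpa [← NNReal.coe_lt_coe] using hB i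
  have hnorm : ‖B‖ < 1 := by
    rw [linfty_opNorm_def]
    exact_mod_cast (Finset.sup_lt_iff zero_lt_one).2 fun i _ => hrow i
  exact tendsto_pow_atTop_nhds_zero_of_norm_lt_one hnorm

theorem sum_norm_one_sub_diagonal_mul_lt_one [SeminormedRing R] {l : Type*} [Fintype l]
    {A : Matrix n l R} {d : n → R} {i : n} (hA : ∑ j, ‖A i j‖ ≤ 1) (hd : ‖1 - d i‖ < 1) :
    ∑ j, ‖((1 - diagonal d) * A : Matrix n l R) i j‖ < 1 :=
  calc ∑ j, ‖((1 - diagonal d) * A : Matrix n l R) i j‖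
      = ∑ j, ‖(1 - d i) * A i j‖ := by simp [Matrix.sub_mul, sub_mul]
    _ ≤ ∑ j, ‖1 - d i‖ * ‖A i j‖ := Finset.sum_le_sum fun j _ => norm_mul_le _ _
    _ = ‖1 - d i‖ * ∑ j, ‖A i j‖ := (Finset.mul_sum ..).symm
    _ ≤ ‖1 - d i‖ := mul_le_of_le_one_right (norm_nonneg _) hA
    _ < 1 := hd

end RowSums

theorem stmt_12_general {m n K : Type*} [Fintype m] [Fintype n] [DecidableEq m] [DecidableEq n]
    [NormedField K] {A : Matrix n n K} {lam : n → K} (W : Matrix n m K)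
    (hA : ∀ i, ∑ j, ‖A i j‖ ≤ 1) (hlam : ∀ i, ‖1 - lam i‖ < 1) :
    Tendsto
      (fun t : ℕ => fromBlocks ((1 - diagonal lam) * A) (diagonal lam * W)
        0 (1 : Matrix m m K) ^ t)
      atTop
      (nhds (fromBlocks 0 ((1 - (1 - diagonal lam) * A)⁻¹ * diagonal lam * W) 0 1)) := by
  have hrow (i : n) : ∑ j, ‖((1 - diagonal lam) * A) i j‖ < 1 :=
    sum_norm_one_sub_diagonal_mul_lt_one (hA i) (hlam i)
  have hpow : Tendsto (fun t : ℕ => ((1 - diagonal lam) * A) ^ t) atTop (nhds 0) :=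
    tendsto_pow_of_forall_sum_norm_lt_one hrow
  rw [Matrix.mul_assoc]
  exact tendsto_fromBlocks_zero_one_pow hpow _

/-- for a row-stochastic `A`, `Λ = diag(λ)` with `λ i ∈ (0,1]`, and a
nonnegative `W` with unit row sums, the augmented row-stochastic matrix
`Ã = [[(I-Λ)A, ΛW],[0, I]]` has convergent powers:
`Ã^t → [[0, F·Λ·W],[0, I]]` where `F = (I - (I-Λ)A)⁻¹`. -/
theorem stmt_12 (N p : ℕ) (A : Matrix (Fin N) (Fin N) ℝ) (lam : Fin N → ℝ)
    (W : Matrix (Fin N) (Fin p) ℝ)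
    (hA : (∀ i j, 0 ≤ A i j) ∧ ∀ i, ∑ j, A i j = 1)
    (hlam : ∀ i, 0 < lam i ∧ lam i ≤ 1)
    (hW : (∀ i j, 0 ≤ W i j) ∧ ∀ i, ∑ j, W i j = 1) :
    Tendsto
      (fun t =>
        (Matrix.fromBlocks ((1 - Matrix.diagonal lam) * A) (Matrix.diagonal lam * W)
          0 (1 : Matrix (Fin p) (Fin p) ℝ)) ^ t)
      atTop
      (nhds (Matrix.fromBlocks 0
        ((1 - (1 - Matrix.diagonal lam) * A)⁻¹ * Matrix.diagonal lam * W)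
        0 (1 : Matrix (Fin p) (Fin p) ℝ))) := by
  have hrow (i : Fin N) : ∑ j, ‖A i j‖ ≤ 1 := by simp [abs_of_nonneg, hA.1, hA.2]
  exact stmt_12_general W hrow fun i => abs_lt.2 (by constructor <;> linarith [hlam i])
end
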